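/- arXiv:1106.5730 — 6 statements merged into one kernel-verified Lean document; each statement's English description precedes it below -/
import Mathlib

section
/- Let c, γ, Ω, M, τ, Δ, Q be positive reals with cγ < 1, and define a∞ = (M²γ²/2)·(Ωτ·Δ^{1/2} + √(Ω²τ²Δ + Q/(cγ)))² and δ = 1 / (1 + √(1 + Q/(cγΩ²τ²Δ))). If a and a' are nonnegative reals satisfying a' ≤ (1 − cγ)·a + γ²·(√2·c·Ω·M·τ·Δ^{1/2})·a^{1/2} + (1/2)·M²γ²·Q, then a' ≤ (1 − cγ(1 − δ))·(a − a∞) + a∞. -/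
/-- Linearization of the one-step Hogwild! recursion about its fixed point:
if `a' ≤ (1 − cγ)a + γ²(√2·cΩMτ√Δ)√a + ½M²γ²Q` for nonnegative reals `a, a'`,
then `a' ≤ (1 − cγ(1 − δ))(a − a∞) + a∞`, where
`a∞ = (M²γ²/2)(Ωτ√Δ + √(Ω²τ²Δ + Q/(cγ)))²` and
`δ = 1/(1 + √(1 + Q/(cγΩ²τ²Δ)))`. -/
theorem hogwild_linearized_recursion
    (c γ Ω M τ Δ Q : ℝ) (hc : 0 < c) (hγ : 0 < γ) (hΩ : 0 < Ω) (hM : 0 < M)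
    (hτ : 0 < τ) (hΔ : 0 < Δ) (hQ : 0 < Q) (hcγ : c * γ < 1)
    (aInf δ : ℝ)
    (haInf : aInf = M ^ 2 * γ ^ 2 / 2 *
      (Ω * τ * Real.sqrt Δ + Real.sqrt (Ω ^ 2 * τ ^ 2 * Δ + Q / (c * γ))) ^ 2)
    (hδ : δ = 1 / (1 + Real.sqrt (1 + Q / (c * γ * Ω ^ 2 * τ ^ 2 * Δ))))
    (a a' : ℝ) (ha : 0 ≤ a) (ha' : 0 ≤ a')
    (hrec : a' ≤ (1 - c * γ) * a +
      γ ^ 2 * (Real.sqrt 2 * c * Ω * M * τ * Real.sqrt Δ) * Real.sqrt a +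
      1 / 2 * M ^ 2 * γ ^ 2 * Q) :
    a' ≤ (1 - c * γ * (1 - δ)) * (a - aInf) + aInf := by
  have hD : 0 < Real.sqrt Δ := Real.sqrt_pos.mpr hΔ
  have hD2 : Real.sqrt Δ ^ 2 = Δ := Real.sq_sqrt hΔ.le
  have hs2 : Real.sqrt a ^ 2 = a := Real.sq_sqrt ha
  have hw2 : Real.sqrt 2 ^ 2 = 2 := Real.sq_sqrt (by norm_num)
  obtain ⟨u, hu⟩ : ∃ u, u = Ω * τ * Real.sqrt Δ := ⟨_, rfl⟩
  have hu0 : 0 < u := by rw [hu]; positivity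
  have hu2 : Ω ^ 2 * τ ^ 2 * Δ = u ^ 2 := by rw [hu, mul_pow, mul_pow, hD2]
  have hX : 0 < Ω ^ 2 * τ ^ 2 * Δ + Q / (c * γ) := by positivity
  have hS0 := Real.sqrt_pos.mpr hX
  have hS2 := Real.sq_sqrt hX.le
  have hden : c * γ * Ω ^ 2 * τ ^ 2 * Δ = c * γ * u ^ 2 := by rw [← hu2]; ring
  rw [← hu] at haInf
  rw [hden] at hδ
  rw [hu2] at haInf hS0 hS2
  generalize Real.sqrt (u ^ 2 + Q / (c * γ)) = S at haInf hS0 hS2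
  have hQ' : Q = c * γ * (S ^ 2 - u ^ 2) := by
    rw [hS2]; field_simp; ring
  have hsq : Real.sqrt (1 + Q / (c * γ * u ^ 2)) = S / u := by
    have h1 : 1 + Q / (c * γ * u ^ 2) = (S / u) ^ 2 := by
      rw [hQ']; field_simp; ring
    rw [h1]; exact Real.sqrt_sq (by positivity)
  have hδ' : δ * (u + S) = u := by
    rw [hδ, hsq]; field_simp
  have hδ0 : 0 < δ := by rw [hδ]; positivity
  have hc1 : γ ^ 2 * (Real.sqrt 2 * c * Ω * M * τ * Real.sqrt Δ) =
      γ ^ 2 * Real.sqrt 2 * c * M * u := by rw [hu]; ring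
  rw [hc1] at hrec
  generalize Real.sqrt a = s at hrec hs2
  generalize Real.sqrt 2 = w at hrec hw2
  have key : (1 - c * γ * (1 - δ)) * (a - aInf) + aInf -
      ((1 - c * γ) * a + γ ^ 2 * w * c * M * u * s + 1 / 2 * M ^ 2 * γ ^ 2 * Q) =
      c * γ * δ * (s - w * M * γ * (u + S) / 2) ^ 2 := by
    have e : u = δ * (u + S) := hδ'.symm
    rw [haInf, hQ', ← hs2]
    linear_combination (-(c * γ * δ * M ^ 2 * γ ^ 2 * (u + S) ^ 2 / 4)) * hw2 +
      (c * γ * γ * w * M * s - c * γ * M ^ 2 * γ ^ 2 * (u + S)) * hδ'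
  have : 0 ≤ c * γ * δ * (s - w * M * γ * (u + S) / 2) ^ 2 := by positivity
  linarith
end

section
/- Let c_r, B, ε > 0, ϑ ∈ (0,1], and set γ = ϑε/(2B); assume c_rγ < 1. Let a∞ be a real number with 0 ≤ a∞ ≤ γB, and let (a_k)_{k≥0} be a nonnegative sequence with 2a₀ ≥ ε satisfying a_{k+1} ≤ (1 − c_rγ)(a_k − a∞) + a∞ for all k. Then for every integer k ≥ 2B·log(2a₀/ε)/(ϑεc_r), we have a_k ≤ ε. -/
/-- Constant-stepsize SGD with `γ = ϑε/(2B)`: if `a∞ ≤ γB` and the linearized recursion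
`a_{k+1} ≤ (1 − c_rγ)(a_k − a∞) + a∞` holds, then after
`k ≥ 2B·log(2a₀/ε)/(ϑεc_r)` iterations we have `a_k ≤ ε`. -/
theorem sgd_constant_stepsize_epsilon
    (cr B ε ϑ γ : ℝ) (hcr : 0 < cr) (hB : 0 < B) (hε : 0 < ε)
    (hϑ : ϑ ∈ Set.Ioc (0 : ℝ) 1) (hγ : γ = ϑ * ε / (2 * B)) (hcγ : cr * γ < 1)
    (aInf : ℝ) (haInf0 : 0 ≤ aInf) (haInf : aInf ≤ γ * B)
    (a : ℕ → ℝ) (hapos : ∀ k, 0 ≤ a k) (ha0 : ε ≤ 2 * a 0)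
    (hrec : ∀ k : ℕ, a (k + 1) ≤ (1 - cr * γ) * (a k - aInf) + aInf) :
    ∀ k : ℕ, 2 * B * Real.log (2 * a 0 / ε) / (ϑ * ε * cr) ≤ (k : ℝ) → a k ≤ ε := by
  intro k hk
  obtain ⟨hϑ0, hϑ1⟩ := hϑ
  have hγ0 : 0 < γ := by rw [hγ]; positivity
  have hγB : γ * B = ϑ * ε / 2 := by rw [hγ]; field_simp
  have hlin : ∀ n : ℕ, a n - aInf ≤ (1 - cr * γ) ^ n * (a 0 - aInf) := by
    intro n
    induction n with
    | zero => simp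
    | succ n ih =>
      have h1 := mul_le_mul_of_nonneg_left ih (by linarith : (0 : ℝ) ≤ 1 - cr * γ)
      have h2 := hrec n
      rw [pow_succ']
      linarith
  have ha0pos : 0 < a 0 := by linarith
  have hlog : Real.log (2 * a 0 / ε) ≤ k * (cr * γ) := by
    rw [div_le_iff₀ (by positivity)] at hk
    have h2 : ϑ * ε = 2 * (γ * B) := by rw [hγB]; ring
    rw [h2] at hk
    have h3 : 2 * B * Real.log (2 * a 0 / ε) ≤ 2 * B * (k * (cr * γ)) := by linarith
    exact le_of_mul_le_mul_left h3 (by positivity)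
  have hexp : 2 * a 0 / ε ≤ Real.exp (k * (cr * γ)) :=
    (Real.log_le_iff_le_exp (by positivity)).1 hlog
  have hpow : (1 - cr * γ) ^ k ≤ Real.exp (-(k * (cr * γ))) := by
    have h := pow_le_pow_left₀ (by linarith : (0 : ℝ) ≤ 1 - cr * γ)
      (Real.one_sub_le_exp_neg (cr * γ)) k
    rw [← Real.exp_nat_mul] at h
    simpa using h
  have hq : 0 ≤ (1 - cr * γ) ^ k := pow_nonneg (by linarith) k
  have h1 : (1 - cr * γ) ^ k * a 0 ≤ ε / 2 := by
    have h2 : (1 - cr * γ) ^ k * a 0 ≤ Real.exp (-(k * (cr * γ))) * a 0 :=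
      mul_le_mul_of_nonneg_right hpow ha0pos.le
    rw [div_le_iff₀ hε] at hexp
    have h3 := mul_le_mul_of_nonneg_left hexp (Real.exp_pos (-(k * (cr * γ)))).le
    rw [← mul_assoc (Real.exp _) (Real.exp _), ← Real.exp_add, neg_add_cancel, Real.exp_zero] at h3
    linarith
  have h2 := hlin k
  have h3 := mul_nonneg hq haInf0
  have h4 : ϑ * ε ≤ 1 * ε := mul_le_mul_of_nonneg_right hϑ1 hε.le
  linarith
end

section
/- Let c_r, B > 0 and ϑ ∈ (0,1), and set γ = ϑ/c_r. Let a∞ be a real number with 0 ≤ a∞ ≤ γB = ϑB/c_r, and let (a_k)_{k≥0} be a nonnegative sequence with a₀ ≥ ϑB/c_r satisfying a_{k+1} ≤ (1 − c_rγ)(a_k − a∞) + a∞ for all k. Then for every integer k ≥ ϑ^{−1}·log(a₀c_r/(ϑB)), we have a_k ≤ 2ϑB/c_r. -/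
/-- Linear-rate phase of the constant-stepsize backoff scheme: with stepsize `γ = ϑ/c_r`,
if `a∞ ≤ ϑB/c_r ≤ a₀` and the linearized recursion holds, then after
`k ≥ ϑ⁻¹·log(a₀c_r/(ϑB))` iterations we have `a_k ≤ 2ϑB/c_r`. -/
theorem sgd_linear_phase
    (cr B ϑ γ : ℝ) (hcr : 0 < cr) (hB : 0 < B)
    (hϑ : ϑ ∈ Set.Ioo (0 : ℝ) 1) (hγ : γ = ϑ / cr)
    (aInf : ℝ) (haInf0 : 0 ≤ aInf) (haInf : aInf ≤ γ * B)
    (a : ℕ → ℝ) (hapos : ∀ k, 0 ≤ a k) (ha0 : ϑ * B / cr ≤ a 0)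
    (hrec : ∀ k : ℕ, a (k + 1) ≤ (1 - cr * γ) * (a k - aInf) + aInf) :
    ∀ k : ℕ, ϑ⁻¹ * Real.log (a 0 * cr / (ϑ * B)) ≤ (k : ℝ) → a k ≤ 2 * ϑ * B / cr := by
  obtain ⟨h0, h1⟩ := hϑ
  have hg : cr * γ = ϑ := by rw [hγ]; field_simp
  have hgB : γ * B = ϑ * B / cr := by rw [hγ]; ring
  rw [hg] at hrec
  rw [hgB] at haInf
  have hM : 0 < ϑ * B / cr := by positivity
  have ha0pos : 0 < a 0 := lt_of_lt_of_le hM ha0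
  have hind : ∀ k : ℕ, a k - aInf ≤ (1 - ϑ) ^ k * (a 0 - aInf) := by
    intro k
    induction k with
    | zero => simp
    | succ n ih =>
      have h2 := mul_le_mul_of_nonneg_left ih (by linarith : (0 : ℝ) ≤ 1 - ϑ)
      have h3 := hrec n
      rw [pow_succ]
      linarith
  intro k hk
  have hp : (1 - ϑ) ^ k ≤ Real.exp (-(ϑ * k)) := by
    have h2 : (1 - ϑ) ^ k ≤ Real.exp (-ϑ) ^ k :=
      pow_le_pow_left₀ (by linarith) (by linarith [Real.add_one_le_exp (-ϑ)]) k
    rw [← Real.exp_nat_mul] at h2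
    convert h2 using 2
    ring
  have hlog : Real.log (a 0 * cr / (ϑ * B)) ≤ ϑ * k := by
    have h2 := mul_le_mul_of_nonneg_left hk h0.le
    rwa [mul_inv_cancel_left₀ h0.ne'] at h2
  have hx : 0 < a 0 * cr / (ϑ * B) := by positivity
  have he : Real.exp (-(ϑ * k)) ≤ (a 0 * cr / (ϑ * B))⁻¹ := by
    rw [← Real.exp_log hx, ← Real.exp_neg]
    exact Real.exp_le_exp.mpr (by linarith)
  have hfin : (1 - ϑ) ^ k * (a 0 - aInf) ≤ ϑ * B / cr := by
    calc (1 - ϑ) ^ k * (a 0 - aInf) ≤ (1 - ϑ) ^ k * a 0 :=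
          mul_le_mul_of_nonneg_left (by linarith) (pow_nonneg (by linarith) k)
      _ ≤ (a 0 * cr / (ϑ * B))⁻¹ * a 0 :=
          mul_le_mul_of_nonneg_right (hp.trans he) ha0pos.le
      _ = ϑ * B / cr := by field_simp
  have h2 : 2 * ϑ * B / cr = ϑ * B / cr + ϑ * B / cr := by ring
  rw [h2]
  linarith [hind k]
end

section
/- Let c_r, B > 0, β ∈ (0,1), ϑ ∈ (0,1), and a₀ ≥ ϑB/c_r. There exists a sequence of stepsizes (γ_j)_{j≥0} with 0 < γ_j ≤ ϑ/c_r for all j (depending only on c_r, B, β, ϑ, a₀) such that: for every nonnegative sequence (a_j)_{j≥0} starting at a₀ and satisfying a_{j+1} ≤ (1 − c_rγ_j)(a_j − γ_jB) + γ_jB for all j, and for every ε ∈ (0, a₀], if k is an integer with k ≥ ϑ^{−1}·log(a₀c_r/(ϑB)) + (2B/(c_rε))·log(2/β)/(1 − β), then a_k ≤ ε. -/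
/-- Normalised stepsizes: constant in the first phase, then harmonic decay. -/
noncomputable def stepAux (ϑ : ℝ) (k0 : ℕ) (j : ℕ) : ℝ :=
  if j < k0 then ϑ else 2 / (((j - k0 : ℕ) : ℝ) + 2 / ϑ)

lemma stepAux_bd (ϑ : ℝ) (h0 : 0 < ϑ) (k0 j : ℕ) :
    0 < stepAux ϑ k0 j ∧ stepAux ϑ k0 j ≤ ϑ := by
  unfold stepAux
  split_ifs
  · exact ⟨h0, le_rfl⟩
  · have h2 : 0 < 2 / ϑ := by positivity
    have h3 : (0 : ℝ) ≤ ((j - k0 : ℕ) : ℝ) := Nat.cast_nonneg _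
    refine ⟨by positivity, ?_⟩
    rw [div_le_iff₀ (by positivity)]
    have : ϑ * (2 / ϑ) = 2 := by field_simp
    nlinarith

lemma phase_one (ϑ : ℝ) (h0 : 0 < ϑ) (h1 : ϑ < 1) (k0 : ℕ) (x : ℕ → ℝ) (hX : ϑ ≤ x 0)
    (hx : ∀ j, x (j + 1) ≤ (1 - stepAux ϑ k0 j) * x j + stepAux ϑ k0 j ^ 2) (j : ℕ)
    (hj : j ≤ k0) : x j - ϑ ≤ Real.exp (-(ϑ * j)) * (x 0 - ϑ) := by
  induction j with
  | zero => simp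
  | succ j ih =>
    have ih := ih (by omega)
    have h := hx j
    have hs : stepAux ϑ k0 j = ϑ := by
      unfold stepAux
      rw [if_pos (by omega)]
    rw [hs] at h
    have he : Real.exp (-(ϑ * ((j + 1 : ℕ) : ℝ))) = Real.exp (-ϑ) * Real.exp (-(ϑ * j)) := by
      rw [← Real.exp_add]
      push_cast
      ring_nf
    rw [he]
    have h2 : 1 - ϑ ≤ Real.exp (-ϑ) := by linarith [Real.add_one_le_exp (-ϑ)]
    have h3 : 0 ≤ Real.exp (-(ϑ * j)) * (x 0 - ϑ) :=
      mul_nonneg (Real.exp_pos _).le (by linarith)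
    have h4 := mul_le_mul_of_nonneg_left ih (by linarith : 0 ≤ 1 - ϑ)
    have h5 := mul_le_mul_of_nonneg_right h2 h3
    nlinarith

lemma phase_two (ϑ : ℝ) (h0 : 0 < ϑ) (h1 : ϑ < 1) (k0 : ℕ) (x : ℕ → ℝ) (hX : x k0 ≤ 2 * ϑ)
    (hx : ∀ j, x (j + 1) ≤ (1 - stepAux ϑ k0 j) * x j + stepAux ϑ k0 j ^ 2) (i : ℕ) :
    x (k0 + i) ≤ 4 / ((i : ℝ) + 2 / ϑ) := by
  induction i with
  | zero =>
    have : 4 / (((0 : ℕ) : ℝ) + 2 / ϑ) = 2 * ϑ := by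
      field_simp
      norm_num
    rw [this]
    exact hX
  | succ i ih =>
    have h := hx (k0 + i)
    have hb := stepAux_bd ϑ h0 k0 (k0 + i)
    have hs : stepAux ϑ k0 (k0 + i) = 2 / ((i : ℝ) + 2 / ϑ) := by
      unfold stepAux
      rw [if_neg (by omega)]
      simp
    have h4 := mul_le_mul_of_nonneg_left ih (by linarith : 0 ≤ 1 - stepAux ϑ k0 (k0 + i))
    rw [hs] at h h4
    have ht : 0 < (i : ℝ) + 2 / ϑ := by positivity
    have hc : (((i + 1 : ℕ) : ℝ) + 2 / ϑ) = ((i : ℝ) + 2 / ϑ) + 1 := by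
      push_cast
      ring
    rw [hc]
    generalize (i : ℝ) + 2 / ϑ = t at *
    have h6 : (1 - 2 / t) * (4 / t) + (2 / t) ^ 2 ≤ 4 / (t + 1) := by
      have : 4 / (t + 1) - ((1 - 2 / t) * (4 / t) + (2 / t) ^ 2) = 4 / (t ^ 2 * (t + 1)) := by
        field_simp
        ring
      have h7 : 0 ≤ 4 / (t ^ 2 * (t + 1)) := by positivity
      linarith
    have h8 : x (k0 + (i + 1)) = x (k0 + i + 1) := by rw [add_assoc]
    rw [h8]
    linarith

lemma const_ge (β : ℝ) (h0 : 0 < β) (h1 : β < 1) : 2 ≤ Real.log (2 / β) / (1 - β) := by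
  rw [le_div_iff₀ (by linarith), Real.log_div (by norm_num) h0.ne']
  have h := Real.log_le_sub_one_of_pos (by positivity : 0 < 2 * β)
  rw [Real.log_mul (by norm_num) h0.ne'] at h
  linarith [Real.log_two_gt_d9]

/-- The piecewise-constant backoff stepsize protocol achieves a `1/k` convergence rate:
there is a sequence of stepsizes `γ_j ≤ ϑ/c_r` such that every nonnegative sequence
starting at `a₀` and satisfying the per-step contraction
`a_{j+1} ≤ (1 − c_rγ_j)(a_j − γ_jB) + γ_jB` reaches accuracy `ε` after
`ϑ⁻¹log(a₀c_r/(ϑB)) + (2B/(c_rε))·log(2/β)/(1 − β)` iterations, for every `ε ∈ (0, a₀]`. -/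
theorem backoff_scheme_one_over_k_rate
    (cr B β ϑ a0 : ℝ) (hcr : 0 < cr) (hB : 0 < B)
    (hβ : β ∈ Set.Ioo (0 : ℝ) 1) (hϑ : ϑ ∈ Set.Ioo (0 : ℝ) 1)
    (ha0 : ϑ * B / cr ≤ a0) :
    ∃ γ : ℕ → ℝ, (∀ j, 0 < γ j ∧ γ j ≤ ϑ / cr) ∧
      ∀ a : ℕ → ℝ, (∀ j, 0 ≤ a j) → a 0 = a0 →
        (∀ j : ℕ, a (j + 1) ≤ (1 - cr * γ j) * (a j - γ j * B) + γ j * B) →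
        ∀ ε : ℝ, ε ∈ Set.Ioc (0 : ℝ) a0 →
          ∀ k : ℕ,
            ϑ⁻¹ * Real.log (a0 * cr / (ϑ * B)) +
              2 * B / (cr * ε) * (Real.log (2 / β) / (1 - β)) ≤ (k : ℝ) →
            a k ≤ ε := by
  obtain ⟨hβ0, hβ1⟩ := hβ
  obtain ⟨h0, h1⟩ := hϑ
  set L : ℝ := ϑ⁻¹ * Real.log (a0 * cr / (ϑ * B)) with hL
  have hX : ϑ ≤ a0 * cr / B := by
    rw [div_le_iff₀ hcr] at ha0
    rwa [le_div_iff₀ hB]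
  have hL0 : 0 ≤ L := by
    refine mul_nonneg (inv_pos.2 h0).le (Real.log_nonneg ?_)
    rw [le_div_iff₀ (by positivity), one_mul]
    rwa [div_le_iff₀ hcr] at ha0
  refine ⟨fun j => stepAux ϑ ⌈L⌉₊ j / cr, fun j => ?_, ?_⟩
  · have hb := stepAux_bd ϑ h0 ⌈L⌉₊ j
    exact ⟨div_pos hb.1 hcr, div_le_div_of_nonneg_right hb.2 hcr.le⟩
  intro a _ ha ih ε hε k hk
  have hε0 := hε.1
  have hx : ∀ j, a (j + 1) * cr / B ≤
      (1 - stepAux ϑ ⌈L⌉₊ j) * (a j * cr / B) + stepAux ϑ ⌈L⌉₊ j ^ 2 := by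
    intro j
    have h := mul_le_mul_of_nonneg_right (ih j) (by positivity : 0 ≤ cr / B)
    calc a (j + 1) * cr / B = a (j + 1) * (cr / B) := by ring
      _ ≤ _ := h
      _ = _ := by
        field_simp
        ring
  have hp1 := phase_one ϑ h0 h1 ⌈L⌉₊ (fun j => a j * cr / B) (by simpa [ha] using hX) hx
    ⌈L⌉₊ le_rfl
  simp only [ha] at hp1
  have hk0 := Nat.le_ceil L
  have hX0 : 0 < a0 * cr / B := by linarith
  have hexp : Real.exp (-(ϑ * (⌈L⌉₊ : ℝ))) ≤ ϑ / (a0 * cr / B) := by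
    have hy : 0 < ϑ / (a0 * cr / B) := by positivity
    rw [← Real.le_log_iff_exp_le hy]
    have e1 : ϑ / (a0 * cr / B) = (a0 * cr / (ϑ * B))⁻¹ := by
      rw [inv_div, div_div_eq_mul_div]
    rw [e1, Real.log_inv]
    have e2 : ϑ * L = Real.log (a0 * cr / (ϑ * B)) := by
      rw [hL, ← mul_assoc, mul_inv_cancel₀ h0.ne', one_mul]
    have := mul_le_mul_of_nonneg_left hk0 h0.le
    linarith
  have hX2 : a ⌈L⌉₊ * cr / B ≤ 2 * ϑ := by
    have g1 := mul_le_mul_of_nonneg_right hexp (by linarith : 0 ≤ a0 * cr / B - ϑ)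
    have g2 : ϑ / (a0 * cr / B) * (a0 * cr / B) = ϑ := div_mul_cancel₀ _ hX0.ne'
    have g3 : 0 < ϑ / (a0 * cr / B) * ϑ := by positivity
    nlinarith
  have hC := const_ge β hβ0 hβ1
  have hq : 0 < 2 * B / (cr * ε) := by positivity
  have hq2 := mul_le_mul_of_nonneg_left hC hq.le
  have hkk : ⌈L⌉₊ ≤ k := Nat.ceil_le.2 (by linarith)
  obtain ⟨i, rfl⟩ := Nat.exists_eq_add_of_le hkk
  have hp2 := phase_two ϑ h0 h1 ⌈L⌉₊ (fun j => a j * cr / B) hX2 hx i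
  have hlt := Nat.ceil_lt_add_one hL0
  push_cast at hk
  have h2 : 2 ≤ 2 / ϑ := by
    rw [le_div_iff₀ h0]
    linarith
  have hi : 2 * B / (cr * ε) * 2 ≤ (i : ℝ) + 2 / ϑ := by linarith
  have hfin : 4 / ((i : ℝ) + 2 / ϑ) ≤ ε * cr / B := by
    rw [div_le_iff₀ (by linarith)]
    have g := mul_le_mul_of_nonneg_left hi (by positivity : 0 ≤ ε * cr / B)
    have e : ε * cr / B * (2 * B / (cr * ε) * 2) = 4 := by
      field_simp
      norm_num
    linarith
  have hle : a (⌈L⌉₊ + i) * cr / B ≤ ε * cr / B := hp2.trans hfin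
  rw [div_le_div_iff_of_pos_right hB] at hle
  exact le_of_mul_le_mul_right hle hcr
end

section
/- Let c, M > 0, β ∈ (0,1), ϑ ∈ (0,1), and let D₀ > 0 satisfy 4D₀c² ≥ ϑM². There exists a sequence of stepsizes (γ_k)_{k≥0} with 0 < γ_k ≤ ϑ/(2c) for all k such that every nonnegative sequence (a_k)_{k≥0} with a₀ = D₀/2 and a_{k+1} ≤ (1 − 2cγ_k)·a_k + (1/2)·γ_k²·M² for all k satisfies, for every integer k > ϑ^{−1}·log(4D₀c²/(ϑM²)), a_k ≤ (log(2/β)/(4(1 − β)))·(M²/c²)·1/(k − ϑ^{−1}·log(4D₀c²/(ϑM²))). -/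
/-- Normalised upper-bound sequence with the greedy capped step `min ϑ u`. -/
noncomputable def sgdU (ϑ u0 : ℝ) : ℕ → ℝ
  | 0 => u0
  | k + 1 => (1 - min ϑ (sgdU ϑ u0 k)) * sgdU ϑ u0 k + (min ϑ (sgdU ϑ u0 k)) ^ 2 / 2

theorem sgdU_pos (ϑ u0 : ℝ) (h0 : 0 < ϑ) (h1 : ϑ < 1) (hu : 0 < u0) (k : ℕ) :
    0 < sgdU ϑ u0 k := by
  induction k with
  | zero => exact hu
  | succ k ih =>
    rw [sgdU]
    have h2 : min ϑ (sgdU ϑ u0 k) ≤ ϑ := min_le_left _ _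
    have h3 : 0 < (1 - min ϑ (sgdU ϑ u0 k)) * sgdU ϑ u0 k := mul_pos (by linarith) ih
    positivity

theorem sgdU_inv (ϑ L : ℝ) (h0 : 0 < ϑ) (h1 : ϑ < 1) (hL : 0 ≤ L) (k : ℕ) :
    (ϑ < sgdU ϑ (ϑ / 2 * Real.exp (ϑ * L)) k ∧ sgdU ϑ (ϑ / 2 * Real.exp (ϑ * L)) k
        ≤ ϑ / 2 * (1 + Real.exp (-(ϑ * (k - L))))) ∨
    (sgdU ϑ (ϑ / 2 * Real.exp (ϑ * L)) k ≤ ϑ ∧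
      sgdU ϑ (ϑ / 2 * Real.exp (ϑ * L)) k * (k - L) ≤ 2) := by
  have hpos := sgdU_pos ϑ (ϑ / 2 * Real.exp (ϑ * L)) h0 h1 (by positivity)
  induction k with
  | zero =>
    have hp := hpos 0
    rcases lt_or_ge ϑ (sgdU ϑ (ϑ / 2 * Real.exp (ϑ * L)) 0) with h | h
    · left
      refine ⟨h, ?_⟩
      rw [sgdU]
      have : -(ϑ * (((0 : ℕ) : ℝ) - L)) = ϑ * L := by push_cast; ring
      rw [this]
      nlinarith
    · right
      refine ⟨h, ?_⟩
      push_cast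
      nlinarith [mul_nonneg hp.le hL]
  | succ k ih =>
    have hp := hpos k
    have hp' := hpos (k + 1)
    have hrec : sgdU ϑ (ϑ / 2 * Real.exp (ϑ * L)) (k + 1) =
        (1 - min ϑ (sgdU ϑ (ϑ / 2 * Real.exp (ϑ * L)) k)) * sgdU ϑ (ϑ / 2 * Real.exp (ϑ * L)) k
          + (min ϑ (sgdU ϑ (ϑ / 2 * Real.exp (ϑ * L)) k)) ^ 2 / 2 := by rw [sgdU]
    generalize sgdU ϑ (ϑ / 2 * Real.exp (ϑ * L)) (k + 1) = v at *
    generalize sgdU ϑ (ϑ / 2 * Real.exp (ϑ * L)) k = u at *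
    push_cast
    rcases ih with ⟨hu, hb⟩ | ⟨hu, hb⟩
    · rw [min_eq_left hu.le] at hrec
      have hkL : (k : ℝ) - L < 0 := by
        by_contra hcon
        have : Real.exp (-(ϑ * (k - L))) ≤ 1 := by
          rw [Real.exp_le_one_iff]
          nlinarith [mul_nonneg h0.le (not_lt.mp hcon)]
        nlinarith
      rcases lt_or_ge ϑ v with h | h
      · left
        refine ⟨h, ?_⟩
        have e1 : Real.exp (-(ϑ * ((k : ℝ) + 1 - L)))
            = Real.exp (-ϑ) * Real.exp (-(ϑ * (k - L))) := by
          rw [← Real.exp_add]; congr 1; ring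
        have e2 : 1 - ϑ ≤ Real.exp (-ϑ) := by linarith [Real.add_one_le_exp (-ϑ)]
        have e3 := mul_le_mul_of_nonneg_right e2 (Real.exp_pos (-(ϑ * (k - L)))).le
        have e4 := mul_le_mul_of_nonneg_left hb (sub_nonneg.mpr h1.le)
        have e5 := mul_le_mul_of_nonneg_left e3 h0.le
        rw [e1, hrec]
        nlinarith
      · right
        refine ⟨h, ?_⟩
        nlinarith
    · right
      rw [min_eq_right hu] at hrec
      have hv : v = u - u ^ 2 / 2 := by rw [hrec]; ring
      refine ⟨by nlinarith, ?_⟩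
      have hz : 0 ≤ 1 - u / 2 := by linarith
      have e := mul_le_mul_of_nonneg_left hb hz
      rw [hv]
      nlinarith [sq_nonneg u]

theorem log_two_div_lower (β : ℝ) (h0 : 0 < β) (h1 : β < 1) :
    1 / 2 ≤ Real.log (2 / β) / (4 * (1 - β)) := by
  rw [le_div_iff₀ (by linarith)]
  have e1 := Real.log_le_sub_one_of_pos (x := 2 * β) (by linarith)
  rw [Real.log_mul (by norm_num) h0.ne'] at e1
  rw [Real.log_div (by norm_num) h0.ne']
  linarith [Real.log_two_gt_d9]

/-- Serial SGD with the constant-stepsize backoff protocol (parameters `c_r = 2c`,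
`B = M²/(4c)`): there is a stepsize schedule `γ_k ≤ ϑ/(2c)` under which every
nonnegative sequence with `a₀ = D₀/2` satisfying
`a_{k+1} ≤ (1 − 2cγ_k)a_k + ½γ_k²M²` obeys the `1/k` bound
`a_k ≤ (log(2/β)/(4(1 − β)))·(M²/c²)·1/(k − ϑ⁻¹log(4D₀c²/(ϑM²)))`. -/
theorem serial_sgd_backoff_rate
    (c M β ϑ D0 : ℝ) (hc : 0 < c) (hM : 0 < M)
    (hβ : β ∈ Set.Ioo (0 : ℝ) 1) (hϑ : ϑ ∈ Set.Ioo (0 : ℝ) 1)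
    (hD0 : 0 < D0) (hD0M : ϑ * M ^ 2 ≤ 4 * D0 * c ^ 2) :
    ∃ γ : ℕ → ℝ, (∀ k, 0 < γ k ∧ γ k ≤ ϑ / (2 * c)) ∧
      ∀ a : ℕ → ℝ, (∀ k, 0 ≤ a k) → a 0 = D0 / 2 →
        (∀ k : ℕ, a (k + 1) ≤ (1 - 2 * c * γ k) * a k + 1 / 2 * (γ k) ^ 2 * M ^ 2) →
        ∀ k : ℕ, ϑ⁻¹ * Real.log (4 * D0 * c ^ 2 / (ϑ * M ^ 2)) < (k : ℝ) →
          a k ≤ Real.log (2 / β) / (4 * (1 - β)) * (M ^ 2 / c ^ 2) *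
            (1 / ((k : ℝ) - ϑ⁻¹ * Real.log (4 * D0 * c ^ 2 / (ϑ * M ^ 2)))) := by
  obtain ⟨hβ0, hβ1⟩ := hβ
  obtain ⟨h0, h1⟩ := hϑ
  have hR : 1 ≤ 4 * D0 * c ^ 2 / (ϑ * M ^ 2) := by
    rw [le_div_iff₀ (by positivity)]; linarith
  set L := ϑ⁻¹ * Real.log (4 * D0 * c ^ 2 / (ϑ * M ^ 2)) with hLdef
  have hL : 0 ≤ L := mul_nonneg (by positivity) (Real.log_nonneg hR)
  have hexp : Real.exp (ϑ * L) = 4 * D0 * c ^ 2 / (ϑ * M ^ 2) := by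
    rw [hLdef, ← mul_assoc, mul_inv_cancel₀ h0.ne', one_mul, Real.exp_log (by linarith)]
  have hpos := sgdU_pos ϑ (ϑ / 2 * Real.exp (ϑ * L)) h0 h1 (by positivity)
  have hinv := sgdU_inv ϑ L h0 h1 hL
  have hrec : ∀ k, sgdU ϑ (ϑ / 2 * Real.exp (ϑ * L)) (k + 1) = _ := fun k => by rw [sgdU]
  have hzero : sgdU ϑ (ϑ / 2 * Real.exp (ϑ * L)) 0 = 2 * c ^ 2 * D0 / M ^ 2 := by
    rw [sgdU, hexp]; field_simp; ring
  generalize sgdU ϑ (ϑ / 2 * Real.exp (ϑ * L)) = u at *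
  refine ⟨fun k => min ϑ (u k) / (2 * c), fun k => ⟨?_, ?_⟩, ?_⟩
  · exact div_pos (lt_min h0 (hpos k)) (by positivity)
  · exact div_le_div_of_nonneg_right (min_le_left _ _) (by positivity)
  intro a _ ha0 harec k hk
  have hle : ∀ k, a k ≤ M ^ 2 / (4 * c ^ 2) * u k := by
    intro k
    induction k with
    | zero =>
      rw [ha0, hzero]
      apply le_of_eq
      field_simp
      try ring
    | succ k ih =>
      have hm : min ϑ (u k) ≤ ϑ := min_le_left _ _
      have h := harec k
      beta_reduce at h
      rw [hrec k]
      generalize min ϑ (u k) = g at *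
      have e : 2 * c * (g / (2 * c)) = g := by field_simp
      have e' := mul_le_mul_of_nonneg_left ih (show 0 ≤ 1 - g by linarith)
      have e2 : 1 / 2 * (g / (2 * c)) ^ 2 * M ^ 2 = M ^ 2 / (4 * c ^ 2) * (g ^ 2 / 2) := by
        field_simp
        try ring
      simp only [e, e2] at h
      linarith
  have ht : 0 < (k : ℝ) - L := by linarith
  have hut : u k * (k - L) ≤ 2 := by
    rcases hinv k with ⟨ha, hb⟩ | ⟨_, hb⟩
    · exfalso
      have : Real.exp (-(ϑ * (k - L))) ≤ 1 := by
        rw [Real.exp_le_one_iff]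
        nlinarith [mul_pos h0 ht]
      nlinarith
    · exact hb
  have hC := log_two_div_lower β hβ0 hβ1
  have hu2 : u k ≤ 2 * (1 / (k - L)) := by
    rw [mul_one_div, le_div_iff₀ ht]; exact hut
  calc a k ≤ M ^ 2 / (4 * c ^ 2) * u k := hle k
    _ ≤ M ^ 2 / (4 * c ^ 2) * (2 * (1 / (k - L))) :=
        mul_le_mul_of_nonneg_left hu2 (by positivity)
    _ = 1 / 2 * (M ^ 2 / c ^ 2) * (1 / (k - L)) := by
        field_simp
        try norm_num
    _ ≤ _ := by gcongr
end

section
/- Let Ω ≥ 1, τ > 0, Δ ∈ (0,1], and ρ ≥ 0 be real numbers, and define Q = Ω + 2τρ + 4Ωρτ + 2τ²Ω²Δ^{1/2}, C = (Ωτ·Δ^{1/2} + √(Ω²τ²Δ + Q))², and δ = 1/(1 + √(1 + Q/(Ω²τ²Δ))). Then C/(1 − δ) ≤ 2Ω·(1 + 6τρ + 6τ²Ω·Δ^{1/2}). -/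
/-- Bound on `C/(1 − δ)` for the Hogwild! constants: with
`Q = Ω + 2τρ + 4Ωρτ + 2τ²Ω²√Δ`, `C = (Ωτ√Δ + √(Ω²τ²Δ + Q))²`, and
`δ = 1/(1 + √(1 + Q/(Ω²τ²Δ)))`, one has `C/(1 − δ) ≤ 2Ω(1 + 6τρ + 6τ²Ω√Δ)`. -/
theorem hogwild_C_div_one_sub_delta_bound
    (Ω τ Δ ρ : ℝ) (hΩ : 1 ≤ Ω) (hτ : 0 < τ) (hΔ : Δ ∈ Set.Ioc (0 : ℝ) 1) (hρ : 0 ≤ ρ)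
    (Q C δ : ℝ)
    (hQ : Q = Ω + 2 * τ * ρ + 4 * Ω * ρ * τ + 2 * τ ^ 2 * Ω ^ 2 * Real.sqrt Δ)
    (hC : C = (Ω * τ * Real.sqrt Δ + Real.sqrt (Ω ^ 2 * τ ^ 2 * Δ + Q)) ^ 2)
    (hδ : δ = 1 / (1 + Real.sqrt (1 + Q / (Ω ^ 2 * τ ^ 2 * Δ)))) :
    C / (1 - δ) ≤ 2 * Ω * (1 + 6 * τ * ρ + 6 * τ ^ 2 * Ω * Real.sqrt Δ) := by
  obtain ⟨hΔ0, hΔ1⟩ := hΔ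
  have hs0 : 0 < Real.sqrt Δ := Real.sqrt_pos.mpr hΔ0
  have hs1 : Real.sqrt Δ ≤ 1 := Real.sqrt_le_one.mpr hΔ1
  have hss : Real.sqrt Δ ^ 2 = Δ := Real.sq_sqrt hΔ0.le
  have hΩ0 : 0 < Ω := by linarith
  have hQ0 : 0 < Q := by rw [hQ]; positivity
  obtain ⟨a, ha⟩ : ∃ a, a = Ω * τ * Real.sqrt Δ := ⟨_, rfl⟩
  have ha0 : 0 < a := by rw [ha]; positivity
  have ha2 : Ω ^ 2 * τ ^ 2 * Δ = a ^ 2 := by rw [ha, mul_pow, hss]; ring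
  rw [ha2] at hC hδ
  rw [← ha] at hC
  obtain ⟨b, hb⟩ : ∃ b, b = Real.sqrt (a ^ 2 + Q) := ⟨_, rfl⟩
  have hb0 : 0 < b := by rw [hb]; positivity
  have hb2 : b ^ 2 = a ^ 2 + Q := by rw [hb]; exact Real.sq_sqrt (by positivity)
  have hab : a ≤ b := by rw [hb]; exact Real.le_sqrt_of_sq_le (by linarith)
  have hr : Real.sqrt (1 + Q / a ^ 2) = b / a := by
    have h1 : 1 + Q / a ^ 2 = (b / a) ^ 2 := by
      rw [div_pow, hb2]; field_simp
    rw [h1]; exact Real.sqrt_sq (by positivity)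
  rw [hr] at hδ
  rw [← hb] at hC
  have hd : 1 - δ = b / (a + b) := by
    rw [hδ]; field_simp; ring
  have hm : a ^ 2 ≤ τ ^ 2 * Ω ^ 2 * Real.sqrt Δ := by
    have h : a ^ 2 = τ ^ 2 * Ω ^ 2 * Real.sqrt Δ * Real.sqrt Δ := by rw [ha]; ring
    rw [h]; exact mul_le_of_le_one_right (by positivity) hs1
  have hρ' : τ * ρ ≤ Ω * (τ * ρ) := le_mul_of_one_le_left (by positivity) hΩ
  have key : C / (1 - δ) ≤ 2 * b ^ 2 + 6 * a ^ 2 := by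
    rw [hC, hd, div_div_eq_mul_div, div_le_iff₀ hb0]
    have h3 : 0 ≤ (b - a) ^ 3 := pow_nonneg (by linarith) 3
    nlinarith [h3]
  have e : 2 * b ^ 2 + 6 * a ^ 2 = 2 * Q + 8 * a ^ 2 := by rw [hb2]; ring
  rw [e, hQ] at key
  nlinarith [key, hm, hρ']
end
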